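/- arXiv:0704.0040 — 2 statements merged into one kernel-verified Lean document; each statement's English description precedes it below -/
import Mathlib

section
/- Let 𝔅 be a unital C*-algebra and let 𝔄₁, 𝔄₂ be unital *-algebras, each containing 𝔅 as a *-subalgebra with the same unit, endowed with positive conditional expectations Φ₁ : 𝔄₁ → 𝔅 and Φ₂ : 𝔄₂ → 𝔅. Let a₁,…,a_n ∈ 𝔄₁ and a_{n+1},…,a_{n+m} ∈ 𝔄₂, and let A = (A_{i,j}) ∈ M_{n+m}(𝔅) be the matrix with entries A_{i,j} = Φ₁(a_i* a_j) if i, j ≤ n; A_{i,j} = Φ₁(a_i*)Φ₂(a_j) if i ≤ n < j; A_{i,j} = Φ₂(a_i*)Φ₁(a_j) if j ≤ n < i; and A_{i,j} = Φ₂(a_i* a_j) if i, j > n. Then A is a positive element of the C*-algebra M_{n+m}(𝔅). -/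
open scoped Matrix

/-!
Each `aᵢ ∈ 𝔄ₖ` splits as `aᵢ = Φₖ(aᵢ) + aᵢ°` with `Φₖ(aᵢ°) = 0`, and
`Φₖ(aᵢ* aⱼ) = Φₖ(aᵢ)* Φₖ(aⱼ) + Φₖ(aᵢ°* aⱼ°)`. Hence `A` is the Gram matrix of the vectors
`(Φₖ(aᵢ), aᵢ°)` in `𝔅 ⊕ 𝔄₁° ⊕ 𝔄₂°`, with `aᵢ°` in the `k`-th summand and `0` in the other: it is a
sum of three Gram matrices of positive `𝔅`-valued forms, whose quadratic forms are nonnegative.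

A self-adjoint `q` in a C⋆-algebra satisfies `q⁻ q q⁻ = -(q⁻)³`, so a self-adjoint matrix with a
nonzero negative part has a nonzero compression `-T* T`; the quadratic form of such a matrix is
negative on some basis vector.
-/

section PositiveMap

variable {A B : Type*} [Ring A] [StarRing A] [Module ℂ A] [NonUnitalRing B]
  [PartialOrder B] [StarRing B] [StarOrderedRing B] [Module ℂ B] [StarModule ℂ B]

theorem isSelfAdjoint_map_of_map_star_mul_self_nonneg (Φ : A →ₗ[ℂ] B)
    (hΦ : ∀ a, 0 ≤ Φ (star a * a)) {a : A} (ha : IsSelfAdjoint a) : IsSelfAdjoint (Φ a) := by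
  have polarization : star (1 + a) * (1 + a) - star (1 - a) * (1 - a) = (4 : ℂ) • a := by
    rw [star_add, star_sub, star_one, ha.star_eq, ofNat_smul_eq_nsmul ℂ 4 a]
    noncomm_ring
  have h : IsSelfAdjoint ((4 : ℂ) • Φ a) := by
    rw [← map_smul, ← polarization, map_sub]
    exact (IsSelfAdjoint.of_nonneg (hΦ _)).sub (IsSelfAdjoint.of_nonneg (hΦ _))
  rw [IsSelfAdjoint, star_smul, star_ofNat] at h
  exact smul_right_injective B (OfNat.ofNat_ne_zero 4 : (4 : ℂ) ≠ 0) h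

theorem map_star_of_map_star_mul_self_nonneg [StarModule ℂ A] (Φ : A →ₗ[ℂ] B)
    (hΦ : ∀ a, 0 ≤ Φ (star a * a)) (a : A) : Φ (star a) = star (Φ a) := by
  have hre := isSelfAdjoint_map_of_map_star_mul_self_nonneg Φ hΦ (realPart a).2
  have him := isSelfAdjoint_map_of_map_star_mul_self_nonneg Φ hΦ (imaginaryPart a).2
  rw [← realPart_add_I_smul_imaginaryPart a]
  simp [hre.star_eq, him.star_eq]

end PositiveMap

section ConditionalExpectation

variable {A B : Type*} [Ring A] [StarRing A] [Algebra ℂ A] [Ring B] [StarRing B] [Algebra ℂ B]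
  [PartialOrder B]

/-- A linear map `Φ : A → B` that is positive and `B`-bimodular, where `B` acts on `A` through
`ι`. These are the maps for which `⟨x, y⟩ = Φ (star x * y)` is a positive `B`-valued
sesquilinear form on the right `B`-module `A`. -/
structure IsPositiveBimoduleMap (ι : B →⋆ₐ[ℂ] A) (Φ : A →ₗ[ℂ] B) : Prop where
  map_mul_mul : ∀ (b b' : B) (a : A), Φ (ι b * a * ι b') = b * Φ a * b'
  map_star_mul_self_nonneg : ∀ a : A, 0 ≤ Φ (star a * a)

/-- A positive conditional expectation `Φ : A → B`, where the inclusion `B ⊆ A` is encoded by the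
⋆-homomorphism `ι`. -/
structure IsPositiveConditionalExpectation (ι : B →⋆ₐ[ℂ] A) (Φ : A →ₗ[ℂ] B) : Prop
    extends IsPositiveBimoduleMap ι Φ where
  map_embedding : ∀ b : B, Φ (ι b) = b

namespace IsPositiveBimoduleMap

variable {ι : B →⋆ₐ[ℂ] A} {Φ : A →ₗ[ℂ] B} [StarModule ℂ A] [StarOrderedRing B] [StarModule ℂ B]

protected theorem map_star (hΦ : IsPositiveBimoduleMap ι Φ) (a : A) : Φ (star a) = star (Φ a) :=
  map_star_of_map_star_mul_self_nonneg Φ hΦ.map_star_mul_self_nonneg a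

theorem posSemidef_gram {κ : Type*} (hΦ : IsPositiveBimoduleMap ι Φ) (x : κ → A) :
    (Matrix.of fun i j => Φ (star (x i) * x j)).PosSemidef := by
  refine ⟨Matrix.IsHermitian.ext fun i j => ?_, fun b => ?_⟩
  · rw [Matrix.of_apply, Matrix.of_apply, ← hΦ.map_star, star_mul, star_star]
  · calc 0 ≤ Φ (star (∑ i ∈ b.support, x i * ι (b i)) * ∑ j ∈ b.support, x j * ι (b j)) :=
          hΦ.map_star_mul_self_nonneg _
      _ = ∑ i ∈ b.support, ∑ j ∈ b.support, star (b i) * Φ (star (x i) * x j) * b j := by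
          simp only [star_sum, Finset.sum_mul_sum, map_sum, star_mul, ← map_star,
            ← hΦ.map_mul_mul, mul_assoc]

end IsPositiveBimoduleMap

namespace IsPositiveConditionalExpectation

variable {ι : B →⋆ₐ[ℂ] A} {Φ : A →ₗ[ℂ] B} [StarModule ℂ A] [StarOrderedRing B] [StarModule ℂ B]

theorem map_star_sub_mul_sub (hΦ : IsPositiveConditionalExpectation ι Φ) (x y : A) :
    Φ (star (x - ι (Φ x)) * (y - ι (Φ y))) = Φ (star x * y) - star (Φ x) * Φ y := by
  have hleft : Φ (ι (star (Φ x)) * y) = star (Φ x) * Φ y := by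
    simpa using hΦ.map_mul_mul (star (Φ x)) 1 y
  have hright : Φ (star x * ι (Φ y)) = star (Φ x) * Φ y := by
    simpa [hΦ.map_star] using hΦ.map_mul_mul 1 (Φ y) (star x)
  simp only [star_sub, sub_mul, mul_sub, map_sub, ← map_star, ← map_mul, hleft, hright,
    hΦ.map_embedding]
  abel

variable {A' : Type*} [Ring A'] [StarRing A'] [Algebra ℂ A'] [StarModule ℂ A']
  {ι' : B →⋆ₐ[ℂ] A'} {Φ' : A' →ₗ[ℂ] B}

theorem posSemidef_fromBlocks {κ κ' : Type*} [Finite κ] [Finite κ']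
    (hΦ : IsPositiveConditionalExpectation ι Φ)
    (hΦ' : IsPositiveConditionalExpectation ι' Φ') (x : κ → A) (y : κ' → A') :
    (Matrix.fromBlocks
      (Matrix.of fun i j => Φ (star (x i) * x j)) (Matrix.of fun i j => Φ (star (x i)) * Φ' (y j))
      (Matrix.of fun i j => Φ' (star (y i)) * Φ (x j))
      (Matrix.of fun i j => Φ' (star (y i) * y j))).PosSemidef := by
  let centredX : κ ⊕ κ' → A := Sum.elim (fun i => x i - ι (Φ (x i))) 0
  let centredY : κ ⊕ κ' → A' := Sum.elim 0 fun i => y i - ι' (Φ' (y i))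
  let means : κ ⊕ κ' → B := Sum.elim (Φ ∘ x) (Φ' ∘ y)
  convert ((hΦ.posSemidef_gram centredX).add (hΦ'.posSemidef_gram centredY)).add
    (Matrix.posSemidef_vecMulVec_star_self means)
  ext (i | i) (j | j) <;>
    simp [centredX, centredY, means, Matrix.vecMulVec_apply, -star_sub, hΦ.map_star_sub_mul_sub,
      hΦ'.map_star_sub_mul_sub, hΦ.map_star, hΦ'.map_star]

end IsPositiveConditionalExpectation

end ConditionalExpectation

theorem eq_zero_of_posSemidef_neg_conjTranspose_mul_self {B m n : Type*} [NormedRing B] [StarRing B]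
    [CStarRing B] [PartialOrder B] [StarOrderedRing B] [Fintype m] {T : Matrix m n B}
    (hT : (-(Tᴴ * T)).PosSemidef) : T = 0 := by
  ext i j
  have hcol : ∑ k, star (T k j) * T k j ≤ 0 := by
    simpa [Matrix.mul_apply] using hT.diag_nonneg (i := j)
  have hnonneg : ∀ k ∈ Finset.univ, 0 ≤ star (T k j) * T k j :=
    fun k _ => star_mul_self_nonneg (T k j)
  have hentry : star (T i j) * T i j = 0 :=
    (Finset.sum_eq_zero_iff_of_nonneg hnonneg).mp
      (hcol.antisymm (Finset.sum_nonneg hnonneg)) i (Finset.mem_univ i)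
  exact CStarRing.star_mul_self_eq_zero_iff (T i j) |>.mp hentry

theorem exists_eq_star_mul_self_of_forall_conjugate {C : Type*} [CStarAlgebra C] {q : C}
    (hq : IsSelfAdjoint q) (h : ∀ c t : C, star c * q * c = -(star t * t) → t = 0) :
    ∃ t : C, q = star t * t := by
  let _ := CStarAlgebra.spectralOrder C
  have _ := CStarAlgebra.spectralOrderedRing C
  have hsa : IsSelfAdjoint q⁻ := (CFC.negPart_nonneg q).isSelfAdjoint
  have hcompress : star q⁻ * q * q⁻ = -(q⁻ ^ 3) := by
    nth_rw 2 [← CFC.posPart_sub_negPart q hq]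
    simp [hsa.star_eq, mul_sub, mul_assoc, pow_succ]
  have hcube_nonneg : 0 ≤ q⁻ ^ 3 := by
    simpa [hsa.star_eq, pow_succ] using star_left_conjugate_nonneg (CFC.negPart_nonneg q) q⁻
  obtain ⟨t, ht⟩ := CStarAlgebra.nonneg_iff_eq_star_mul_self.mp hcube_nonneg
  have hcube : q⁻ ^ 3 = 0 := by rw [ht, h q⁻ t (ht ▸ hcompress), mul_zero]
  have hnorm : ‖q⁻‖ ^ 2 ^ 2 = 0 := by
    rw [← hsa.norm_pow_two_pow, show 2 ^ 2 = 3 + 1 from rfl, pow_succ, hcube, zero_mul, norm_zero]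
  have hneg : q⁻ = 0 := norm_eq_zero.mp (eq_zero_of_pow_eq_zero hnorm)
  exact CStarAlgebra.nonneg_iff_eq_star_mul_self.mp ((CFC.negPart_eq_zero_iff q hq).mp hneg)

theorem exists_eq_conjTranspose_mul_self_of_posSemidef {B κ : Type*} [CStarAlgebra B]
    [PartialOrder B] [StarOrderedRing B] [Fintype κ] {M : Matrix κ κ B} (hM : M.PosSemidef) :
    ∃ T : Matrix κ κ B, M = Tᴴ * T := by
  classical
  -- `CStarMatrix κ κ B` is `Matrix κ κ B` by definition, but carries the C⋆-norm.
  refine exists_eq_star_mul_self_of_forall_conjugate (C := CStarMatrix κ κ B) hM.isHermitian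
    fun (C T : Matrix κ κ B) (hCT : Cᴴ * M * C = -(Tᴴ * T)) => ?_
  exact eq_zero_of_posSemidef_neg_conjTranspose_mul_self (hCT ▸ hM.conjTranspose_mul_mul_same C)

/-!
STATEMENT 0: Let `𝔅` be a unital C*-algebra, `𝔄₁, 𝔄₂` unital *-algebras containing `𝔅`
as a *-subalgebra (via unital *-algebra embeddings `ι₁, ι₂`), with positive conditional
expectations `Φ₁ : 𝔄₁ → 𝔅`, `Φ₂ : 𝔄₂ → 𝔅`.  For `a₁,…,aₙ ∈ 𝔄₁` and
`a_{n+1},…,a_{n+m} ∈ 𝔄₂`, the matrix `A ∈ M_{n+m}(𝔅)` with entries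
`Φ₁(aᵢ*aⱼ)` (`i,j ≤ n`), `Φ₁(aᵢ*)Φ₂(aⱼ)` (`i ≤ n < j`), `Φ₂(aᵢ*)Φ₁(aⱼ)` (`j ≤ n < i`),
`Φ₂(aᵢ*aⱼ)` (`i,j > n`) is a positive element of the C*-algebra `M_{n+m}(𝔅)`.

Positivity of the matrix is expressed by the (equivalent) standard characterization of
positive elements of the C*-algebra `M_{n+m}(𝔅)`: `A = Tᴴ T` for some matrix `T`.
The index set `{1,…,n+m}` is encoded as `Fin n ⊕ Fin m`.
-/

theorem stmt_0 {B A1 A2 : Type*}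
    [CStarAlgebra B] [PartialOrder B] [StarOrderedRing B]
    [Ring A1] [Algebra ℂ A1] [StarRing A1] [StarModule ℂ A1]
    [Ring A2] [Algebra ℂ A2] [StarRing A2] [StarModule ℂ A2]
    (ι1 : B →⋆ₐ[ℂ] A1) (ι2 : B →⋆ₐ[ℂ] A2)
    (hι1 : Function.Injective ι1) (hι2 : Function.Injective ι2)
    (Φ1 : A1 →ₗ[ℂ] B) (Φ2 : A2 →ₗ[ℂ] B)
    -- `Φ₁` is a conditional expectation:
    (hΦ1bimod : ∀ (b b' : B) (a : A1), Φ1 (ι1 b * a * ι1 b') = b * Φ1 a * b')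
    (hΦ1id : ∀ b : B, Φ1 (ι1 b) = b)
    -- `Φ₁` is positive:
    (hΦ1pos : ∀ a : A1, 0 ≤ Φ1 (star a * a))
    -- `Φ₂` is a positive conditional expectation:
    (hΦ2bimod : ∀ (b b' : B) (a : A2), Φ2 (ι2 b * a * ι2 b') = b * Φ2 a * b')
    (hΦ2id : ∀ b : B, Φ2 (ι2 b) = b)
    (hΦ2pos : ∀ a : A2, 0 ≤ Φ2 (star a * a))
    (n m : ℕ) (x : Fin n → A1) (y : Fin m → A2) :
    ∃ T : Matrix (Fin n ⊕ Fin m) (Fin n ⊕ Fin m) B,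
      (Matrix.of fun i j =>
        match i, j with
        | Sum.inl i, Sum.inl j => Φ1 (star (x i) * x j)
        | Sum.inl i, Sum.inr j => Φ1 (star (x i)) * Φ2 (y j)
        | Sum.inr i, Sum.inl j => Φ2 (star (y i)) * Φ1 (x j)
        | Sum.inr i, Sum.inr j => Φ2 (star (y i) * y j)) = Tᴴ * T := by
  have hΦ1 : IsPositiveConditionalExpectation ι1 Φ1 := ⟨⟨hΦ1bimod, hΦ1pos⟩, hΦ1id⟩
  have hΦ2 : IsPositiveConditionalExpectation ι2 Φ2 := ⟨⟨hΦ2bimod, hΦ2pos⟩, hΦ2id⟩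
  obtain ⟨T, hT⟩ :=
    exists_eq_conjTranspose_mul_self_of_posSemidef (hΦ1.posSemidef_fromBlocks hΦ2 x y)
  refine ⟨T, Eq.trans ?_ hT⟩
  ext (i | i) (j | j) <;> rfl
end

section
/- Let X and Y be selfadjoint elements of 𝔄 that are c-free with respect to (Φ, Ψ). Suppose that Φ(a*a) ≥ 0 and Ψ(a*a) ≥ 0 for every a in the *-subalgebra of 𝔄 generated by 𝔅 ∪ {X}, and likewise for every a in the *-subalgebra generated by 𝔅 ∪ {Y}. Then Φ(a*a) ≥ 0 and Ψ(a*a) ≥ 0 for every a in the *-subalgebra of 𝔄 generated by 𝔅 ∪ {X+Y}. -/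
/-!
STATEMENT 3: Let `X` and `Y` be selfadjoint elements of `𝔄` which are c-free with
respect to `(Φ, Ψ)` (i.e. the *-subalgebras generated by `𝔅 ∪ {X}` and `𝔅 ∪ {Y}` are
c-free).  If `Φ(a*a) ≥ 0` and `Ψ(a*a) ≥ 0` for every `a` in the *-subalgebra generated
by `𝔅 ∪ {X}`, and likewise for `𝔅 ∪ {Y}`, then `Φ(a*a) ≥ 0` and `Ψ(a*a) ≥ 0` for every
`a` in the *-subalgebra generated by `𝔅 ∪ {X + Y}`.
-/

/-- The family `S` of *-subalgebras of `A` is conditionally free (c-free) with respect to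
`(Φ, Ψ)`: for every `n ≥ 1`, every tuple `a₁, …, aₙ` with `aⱼ ∈ S (ε j)`,
`ε(1) ≠ ε(2) ≠ … ≠ ε(n)` (adjacent indices distinct) and `Ψ(aⱼ) = 0`, one has
`Ψ(a₁⋯aₙ) = 0` and `Φ(a₁⋯aₙ) = Φ(a₁)⋯Φ(aₙ)`. -/
def IsCFreeFamily {B A I : Type*} [Ring B] [Algebra ℂ B] [Ring A] [Algebra ℂ A]
    [StarRing A] [StarModule ℂ A]
    (Φ Ψ : A →ₗ[ℂ] B) (S : I → StarSubalgebra ℂ A) : Prop :=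
  ∀ (m : ℕ) (ε : Fin (m + 1) → I), (∀ i : Fin m, ε i.castSucc ≠ ε i.succ) →
    ∀ a : Fin (m + 1) → A, (∀ j, a j ∈ S (ε j)) → (∀ j, Ψ (a j) = 0) →
      Ψ (List.ofFn a).prod = 0 ∧
      Φ (List.ofFn a).prod = (List.ofFn fun j => Φ (a j)).prod

/-!
The covariance `Cov(u, v) = E(u* v) - E(u)* E(v)` is studied for `E = Φ` and `E = Ψ` at once; since
`E(u* u) = Cov(u, u) + E(u)* E(u)`, it is enough to show that `Cov` is positive. C-freeness makes
alternating words in centered elements that start in different subalgebras `Cov`-orthogonal, and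
splitting `c* c'` into its centered part and `Ψ(c* c')` it yields, for words `w`, `w'` starting
outside the subalgebra of `c` and `c'`,

`Cov(c w, c' w') = E(w)* Cov(c, c') E(w') + Cov(w, Ψ(c* c') w')`.

For `u = ∑ⱼ cⱼ wⱼ` the first term contributes `Cov(v, v)` with `v = ∑ⱼ cⱼ E(wⱼ)` in a single
subalgebra, where positivity is assumed. The Gram matrix `(Ψ(cⱼ* cₖ))` is positive over the
C*-algebra `𝔇`, hence equal to `q* q`, so the second term contributes `∑ₗ Cov(vₗ, vₗ)` with
`vₗ = ∑ⱼ qₗⱼ wⱼ`, and these are shorter words.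
-/

section CStarAlgebra

open scoped CStarAlgebra

variable {B C n : Type*} [CStarAlgebra B] [PartialOrder B] [StarOrderedRing B]
  [CStarAlgebra C] [PartialOrder C] [StarOrderedRing C] [Fintype n]

theorem nonneg_of_map_nonneg_of_injective {f : C →⋆ₐ[ℂ] B} (hf : Function.Injective f) {c : C}
    (hc : 0 ≤ f c) : 0 ≤ c := by
  have hc_star : IsSelfAdjoint c := hf ((map_star f c).trans hc.isSelfAdjoint.star_eq)
  rw [StarOrderedRing.nonneg_iff_spectrum_nonneg (R := ℝ) c, ← hc_star.map_spectrum_real f hf]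
  exact fun _ hx => spectrum_nonneg_of_nonneg hc hx

theorem exists_eq_star_mul_self_of_forall_conjugate_s3 {p : C} (hp : IsSelfAdjoint p)
    (h : ∀ r x : C, star r * r = -(star x * p * x) → r = 0) : ∃ q, p = star q * q := by
  have hN : 0 ≤ p⁻ := CFC.negPart_nonneg p
  have hpN : p * p⁻ = -(p⁻ * p⁻) := by
    nth_rw 1 [← CFC.posPart_sub_negPart p hp]
    rw [sub_mul, CFC.posPart_mul_negPart, zero_sub]
  -- For `x = p⁻` and `r = √p⁻ * p⁻`, both sides of the equation in `h` are the cube of `p⁻`.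
  have hr : CFC.sqrt p⁻ * p⁻ = 0 := h _ p⁻ <| by
    rw [star_mul, (CFC.sqrt_nonneg p⁻).star_eq, hN.star_eq, mul_assoc, ← mul_assoc (CFC.sqrt _),
      CFC.sqrt_mul_sqrt_self _ hN, mul_assoc, hpN, mul_neg, neg_neg]
  have hNN : star p⁻ * p⁻ = 0 := by
    rw [hN.star_eq]
    nth_rw 1 [← CFC.sqrt_mul_sqrt_self _ hN]
    rw [mul_assoc, hr, mul_zero]
  exact CStarAlgebra.nonneg_iff_eq_star_mul_self.1 <| (CFC.negPart_eq_zero_iff p hp).1 <|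
    (CStarRing.star_mul_self_eq_zero_iff _).1 hNN

theorem eq_zero_of_star_mul_self_diag_nonpos {r : CStarMatrix n n C}
    (h : ∀ k, (star r * r) k k ≤ 0) : r = 0 := by
  ext i k
  have hsum : ∑ j, star (r j k) * r j k = 0 :=
    le_antisymm (h k) (Finset.sum_nonneg fun j _ => star_mul_self_nonneg (r j k))
  exact (CStarRing.star_mul_self_eq_zero_iff _).1 <|
    (Finset.sum_eq_zero_iff_of_nonneg fun j _ => star_mul_self_nonneg (r j k)).1 hsum i
      (Finset.mem_univ i)

theorem exists_eq_sum_star_mul {p : n → n → C} (hp : ∀ i j, star (p i j) = p j i)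
    (h : ∀ x : n → C, 0 ≤ ∑ i, ∑ j, star (x i) * p i j * x j) :
    ∃ q : n → n → C, ∀ i j, p i j = ∑ k, star (q k i) * q k j := by
  classical
  let P : CStarMatrix n n C := CStarMatrix.ofMatrix p
  have hP : IsSelfAdjoint P := by
    ext i j
    exact hp j i
  obtain ⟨q, hq⟩ := exists_eq_star_mul_self_of_forall_conjugate_s3 hP fun r x hrx =>
    eq_zero_of_star_mul_self_diag_nonpos fun k => by
      have hk : (star x * P * x) k k = ∑ i, ∑ j, star (x i k) * p i j * x j k := by
        simp only [CStarMatrix.mul_apply, CStarMatrix.star_apply, Finset.sum_mul]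
        exact Finset.sum_comm
      rw [hrx, CStarMatrix.neg_apply, hk]
      exact neg_nonpos.2 (h fun i => x i k)
  exact ⟨q, fun i j => congrFun₂ hq i j⟩

theorem exists_mem_eq_sum_star_mul {D : StarSubalgebra ℂ B} (hD : IsClosed (D : Set B))
    {p : n → n → B} (hpD : ∀ i j, p i j ∈ D) (hp : ∀ i j, star (p i j) = p j i)
    (h : ∀ x : n → B, (∀ i, x i ∈ D) → 0 ≤ ∑ i, ∑ j, star (x i) * p i j * x j) :
    ∃ q : n → n → B, (∀ i j, q i j ∈ D) ∧ ∀ i j, p i j = ∑ k, star (q k i) * q k j := by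
  have : IsClosed (D : Set B) := hD
  let _ : PartialOrder D := CStarAlgebra.spectralOrder D
  let _ : StarOrderedRing D := CStarAlgebra.spectralOrderedRing D
  obtain ⟨q, hq⟩ := exists_eq_sum_star_mul (p := fun i j => (⟨p i j, hpD i j⟩ : D))
    (fun i j => Subtype.ext (hp i j)) fun x =>
      nonneg_of_map_nonneg_of_injective (f := D.subtype) Subtype.val_injective <| by
        simpa using h (fun i => x i) fun i => (x i).2
  refine ⟨fun i j => q i j, fun i j => (q i j).2, fun i j => ?_⟩
  simpa using congrArg Subtype.val (hq i j)

end CStarAlgebra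

theorem map_star_of_forall_map_star_mul_self_nonneg {A B : Type*} [Ring A] [Algebra ℂ A]
    [StarRing A] [StarModule ℂ A] [Ring B] [Algebra ℂ B] [StarRing B] [StarModule ℂ B]
    [PartialOrder B] [StarOrderedRing B] {E : A →ₗ[ℂ] B} {S : StarSubalgebra ℂ A}
    (hE : ∀ a ∈ S, 0 ≤ E (star a * a)) {a : A} (ha : a ∈ S) : E (star a) = star (E a) := by
  have hsa : ∀ x ∈ S, IsSelfAdjoint (E (star x * x)) := fun x hx => (hE x hx).isSelfAdjoint
  have hadd : ∀ x ∈ S, star (E x) + star (E (star x)) = E x + E (star x) := fun x hx => by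
    have hexp : star (1 + x) * (1 + x) - star 1 * 1 - star x * x = x + star x := by
      simp only [star_add, star_one]
      noncomm_ring
    have h := ((hsa (1 + x) (add_mem (one_mem S) hx)).sub (hsa 1 (one_mem S))).sub (hsa x hx)
    rw [← map_sub, ← map_sub, hexp, map_add] at h
    simpa only [star_add] using h.star_eq
  have hsub : star (E (star a)) - star (E a) = E a - E (star a) := by
    have h := hadd (Complex.I • a) (S.smul_mem ha _)
    refine (smul_right_injective B Complex.I_ne_zero) ?_
    simp only [star_smul, map_smul, RCLike.star_def, Complex.conj_I, star_neg] at h ⊢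
    linear_combination (norm := module) h
  have h2 : (2 : ℂ) • star (E (star a)) = (2 : ℂ) • E a := by
    linear_combination (norm := module) hadd a ha + hsub
  rw [← smul_right_injective B two_ne_zero h2, star_star]

theorem sesquilin_self_nonneg_of_mem_iSup {K M B κ : Type*} [CommSemiring K] [StarRing K]
    [AddCommMonoid M] [Module K M] [AddCommMonoid B] [Module K B] [PartialOrder B]
    [IsOrderedAddMonoid B] {F : M →ₗ⋆[K] M →ₗ[K] B} {P : κ → Submodule K M}
    (hP : ∀ i, ∀ u ∈ P i, 0 ≤ F u u) (horth : ∀ i j, i ≠ j → ∀ u ∈ P i, ∀ v ∈ P j, F u v = 0)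
    {u : M} (hu : u ∈ ⨆ i, P i) : 0 ≤ F u u := by
  classical
  obtain ⟨f, hf, rfl⟩ := (Submodule.mem_iSup_iff_exists_finsupp P u).1 hu
  have hdiag : F (f.sum fun _ x => x) (f.sum fun _ x => x) = ∑ i ∈ f.support, F (f i) (f i) := by
    simp only [Finsupp.sum, map_sum, LinearMap.sum_apply]
    exact Finset.sum_congr rfl fun i hi => Finset.sum_eq_single_of_mem i hi fun j _ hj =>
      horth j i hj _ (hf j) _ (hf i)
  exact hdiag ▸ Finset.sum_nonneg fun i _ => hP i _ (hf i)

theorem exists_eq_sum_mul_of_mem_mul {R A : Type*} [CommSemiring R] [Semiring A] [Algebra R A]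
    {P Q : Submodule R A} {u : A} (hu : u ∈ P * Q) :
    ∃ (m : ℕ) (c w : Fin m → A), (∀ j, c j ∈ P) ∧ (∀ j, w j ∈ Q) ∧ u = ∑ j, c j * w j := by
  induction hu using Submodule.mul_induction_on' with
  | mem_mul_mem c hc w hw => exact ⟨1, fun _ => c, fun _ => w, by simp [hc], by simp [hw], by simp⟩
  | add x _ y _ hx hy =>
    obtain ⟨m, c, w, hc, hw, rfl⟩ := hx
    obtain ⟨m', c', w', hc', hw', rfl⟩ := hy
    refine ⟨m + m', Fin.append c c', Fin.append w w', ?_, ?_, ?_⟩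
    · exact (Fin.forall_fin_add _).2 ⟨by simpa using hc, by simpa using hc'⟩
    · exact (Fin.forall_fin_add _).2 ⟨by simpa using hw, by simpa using hw'⟩
    · simp [Fin.sum_univ_add]

theorem prod_ofFn_snoc {M : Type*} [Monoid M] {n : ℕ} (f : Fin n → M) (x : M) :
    (List.ofFn (Fin.snoc f x : Fin (n + 1) → M)).prod = (List.ofFn f).prod * x := by
  simp [List.ofFn_succ', -List.ofFn_succ]

theorem adjoin_union_singleton_add_le (R : Type*) {A : Type*} [CommSemiring R] [StarRing R]
    [Semiring A] [StarRing A] [Algebra R A] [StarModule R A] (s : Set A) (x y : A) :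
    StarAlgebra.adjoin R (s ∪ {x + y}) ≤
      StarAlgebra.adjoin R (s ∪ {x}) ⊔ StarAlgebra.adjoin R (s ∪ {y}) := by
  have hx : x ∈ StarAlgebra.adjoin R (s ∪ {x}) := StarAlgebra.subset_adjoin R _ (.inr rfl)
  have hy : y ∈ StarAlgebra.adjoin R (s ∪ {y}) := StarAlgebra.subset_adjoin R _ (.inr rfl)
  have hs : s ⊆ StarAlgebra.adjoin R (s ∪ {x}) :=
    Set.subset_union_left.trans (StarAlgebra.subset_adjoin R _)
  exact StarAlgebra.adjoin_le <| Set.union_subset (hs.trans (le_sup_left (α := StarSubalgebra R A)))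
    (Set.singleton_subset_iff.2 (add_mem (le_sup_left (α := StarSubalgebra R A) hx)
      (le_sup_right (α := StarSubalgebra R A) hy)))

section CenteredPart

variable {A B : Type*} [Ring A] [Algebra ℂ A] [StarRing A] [StarModule ℂ A] [Ring B] [Algebra ℂ B]

/-- The elements of `T` annihilated by `Ψ`. -/
def centeredPart (Ψ : A →ₗ[ℂ] B) (T : StarSubalgebra ℂ A) : Submodule ℂ A :=
  Subalgebra.toSubmodule T.toSubalgebra ⊓ LinearMap.ker Ψ

theorem star_mem_centeredPart [StarRing B] {Ψ : A →ₗ[ℂ] B} {T : StarSubalgebra ℂ A}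
    {c : A} (hΨ : ∀ a ∈ T, Ψ (star a) = star (Ψ a))
    (hc : c ∈ centeredPart Ψ T) : star c ∈ centeredPart Ψ T :=
  ⟨star_mem (S := StarSubalgebra ℂ A) hc.1, by simp [hΨ c hc.1, LinearMap.mem_ker.1 hc.2]⟩

protected theorem IsCFreeFamily.self {I : Type*} {E Ψ : A →ₗ[ℂ] B} {S : I → StarSubalgebra ℂ A}
    (h : IsCFreeFamily E Ψ S) : IsCFreeFamily Ψ Ψ S :=
  fun m ε hε a ha ha0 => by
    refine ⟨(h m ε hε a ha ha0).1, ?_⟩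
    rw [(h m ε hε a ha ha0).1, List.ofFn_succ, List.prod_cons, ha0, zero_mul]

end CenteredPart

section CFree

variable {A B I : Type*} [Ring A] [Algebra ℂ A] [StarRing A] [Ring B] [Algebra ℂ B] [StarRing B]
  [StarModule ℂ B]

/-- `E` is a conditional expectation onto the subalgebra `R` of `B`, where `B` is regarded as a
subalgebra of `A` through `ι`. Taking `B` rather than `R` as the codomain lets `Φ : A → B` and
`Ψ : A → D` be treated alike. -/
structure IsConditionalExpectation (ι : B →⋆ₐ[ℂ] A) (R : StarSubalgebra ℂ B) (E : A →ₗ[ℂ] B) :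
    Prop where
  map_mem : ∀ a, E a ∈ R
  map_mul_mul : ∀ b ∈ R, ∀ b' ∈ R, ∀ a, E (ι b * a * ι b') = b * E a * b'
  map_coe : ∀ b ∈ R, E (ι b) = b

variable {ι : B →⋆ₐ[ℂ] A} {D R : StarSubalgebra ℂ B} {E Ψ : A →ₗ[ℂ] B}

namespace IsConditionalExpectation

theorem map_coe_mul (hE : IsConditionalExpectation ι R E) {b : B} (hb : b ∈ R) (a : A) :
    E (ι b * a) = b * E a := by
  simpa using hE.map_mul_mul b hb 1 (one_mem R) a

theorem map_mul_coe (hE : IsConditionalExpectation ι R E) {b : B} (hb : b ∈ R) (a : A) :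
    E (a * ι b) = E a * b := by
  simpa using hE.map_mul_mul 1 (one_mem R) b hb a

end IsConditionalExpectation

variable [StarModule ℂ A]

/-- The `B`-valued covariance `(u, v) ↦ E(u* v) - E(u)* E(v)` of a linear map `E : A → B`. -/
def covariance (E : A →ₗ[ℂ] B) : A →ₗ⋆[ℂ] A →ₗ[ℂ] B :=
  LinearMap.mk₂'ₛₗ (starRingEnd ℂ) (RingHom.id ℂ) (fun u v => E (star u * v) - star (E u) * E v)
    (fun u u' v => by simp only [star_add, add_mul, map_add]; abel)
    (fun z u v => by simp [smul_sub])
    (fun u v v' => by simp only [mul_add, map_add]; abel)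
    (fun z u v => by simp [smul_sub])

/-- The span of the products `a₁ ⋯ aₘ d` with `m < n`, `d ∈ D` and `aⱼ ∈ S (ε j)` centered with
respect to `Ψ`, where `ε 1 ∈ s` (if `m ≠ 0`) and neighbouring values of `ε` differ. Bounding `m`
by `m < n` makes the base case of the recursion the zero submodule. -/
def wordSpan (ι : B →⋆ₐ[ℂ] A) (D : StarSubalgebra ℂ B) (Ψ : A →ₗ[ℂ] B)
    (S : I → StarSubalgebra ℂ A) : ℕ → Set I → Submodule ℂ A
  | 0, _ => ⊥
  | n + 1, s => Subalgebra.toSubmodule (D.map ι).toSubalgebra ⊔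
      ⨆ i ∈ s, centeredPart Ψ (S i) * wordSpan ι D Ψ S n {i}ᶜ

variable {S : I → StarSubalgebra ℂ A} {T : StarSubalgebra ℂ A} {m n : ℕ} {s t : Set I} {i : I}
  {a a' b c c' d u v w w' : A}

theorem covariance_apply (E : A →ₗ[ℂ] B) (u v : A) :
    covariance E u v = E (star u * v) - star (E u) * E v := rfl

namespace IsConditionalExpectation

theorem sub_coe_mem_centeredPart (hΨ : IsConditionalExpectation ι D Ψ) (hT : ∀ b, ι b ∈ T)
    (ha : a ∈ T) : a - ι (Ψ a) ∈ centeredPart Ψ T :=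
  ⟨sub_mem ha (hT _), by simp [hΨ.map_coe _ (hΨ.map_mem a)]⟩

theorem coe_mul_mem_centeredPart (hΨ : IsConditionalExpectation ι D Ψ) (hT : ∀ b, ι b ∈ T)
    {d : B} (hd : d ∈ D) (hc : c ∈ centeredPart Ψ T) : ι d * c ∈ centeredPart Ψ T :=
  ⟨mul_mem (S := StarSubalgebra ℂ A) (hT d) hc.1,
    by simp [hΨ.map_coe_mul hd, LinearMap.mem_ker.1 hc.2]⟩

theorem covariance_coe_left (hE : IsConditionalExpectation ι R E) {b : B} (hb : b ∈ R) (v : A) :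
    covariance E (ι b) v = 0 := by
  rw [covariance_apply, ← map_star, hE.map_coe_mul (star_mem hb), hE.map_coe b hb, sub_self]

theorem covariance_mul_coe (hE : IsConditionalExpectation ι R E) {b b' : B} (hb : b ∈ R)
    (hb' : b' ∈ R) (u v : A) :
    covariance E (u * ι b) (v * ι b') = star b * covariance E u v * b' := by
  have hassoc : star (u * ι b) * (v * ι b') = ι (star b) * (star u * v) * ι b' := by
    simp [mul_assoc, map_star]
  rw [covariance_apply, covariance_apply, hassoc, hE.map_mul_mul _ (star_mem hb) _ hb',
    hE.map_mul_coe hb, hE.map_mul_coe hb', star_mul]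
  noncomm_ring

theorem covariance_coe_mul_left (hE : IsConditionalExpectation ι R E) {b : B} (hb : b ∈ R)
    (u v : A) : covariance E (ι b * u) v = covariance E u (ι (star b) * v) := by
  simp only [covariance_apply, hE.map_coe_mul hb, hE.map_coe_mul (star_mem hb), star_mul,
    ← map_star, mul_assoc]

end IsConditionalExpectation

namespace wordSpan

theorem succ_le {P : Submodule ℂ A} (hcoe : ∀ d ∈ D, ι d ∈ P)
    (hmul : ∀ i ∈ s, ∀ c ∈ centeredPart Ψ (S i), ∀ w ∈ wordSpan ι D Ψ S n {i}ᶜ, c * w ∈ P) :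
    wordSpan ι D Ψ S (n + 1) s ≤ P := by
  refine sup_le ?_ (iSup₂_le fun i hi => Submodule.mul_le.2 (hmul i hi))
  rintro _ ⟨d, hd, rfl⟩
  exact hcoe d hd

theorem coe_mem {d : B} (hd : d ∈ D) : ι d ∈ wordSpan ι D Ψ S (n + 1) s :=
  le_sup_left (a := Subalgebra.toSubmodule (D.map ι).toSubalgebra) ⟨d, hd, rfl⟩

theorem mul_le (hi : i ∈ s) :
    centeredPart Ψ (S i) * wordSpan ι D Ψ S n {i}ᶜ ≤ wordSpan ι D Ψ S (n + 1) s :=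
  (le_iSup₂ (f := fun i _ => centeredPart Ψ (S i) * wordSpan ι D Ψ S n {i}ᶜ) i hi).trans
    le_sup_right

theorem mul_mem (hi : i ∈ s) (hc : c ∈ centeredPart Ψ (S i))
    (hw : w ∈ wordSpan ι D Ψ S n {i}ᶜ) : c * w ∈ wordSpan ι D Ψ S (n + 1) s :=
  mul_le hi (Submodule.mul_mem_mul hc hw)

theorem mono (hnm : n ≤ m) (hst : s ⊆ t) : wordSpan ι D Ψ S n s ≤ wordSpan ι D Ψ S m t := by
  induction n generalizing m s t with
  | zero => exact bot_le
  | succ n ih =>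
    obtain ⟨m, rfl⟩ := Nat.exists_eq_add_of_lt hnm
    exact succ_le (fun d hd => coe_mem hd) fun i hi c hc w hw =>
      mul_mem (hst hi) hc (ih (by omega) Set.Subset.rfl hw)

theorem coe_mul_mem (hΨ : IsConditionalExpectation ι D Ψ) (hS : ∀ i b, ι b ∈ S i) {d : B}
    (hd : d ∈ D) (hu : u ∈ wordSpan ι D Ψ S n s) : ι d * u ∈ wordSpan ι D Ψ S n s := by
  cases n with
  | zero => simp [(Submodule.mem_bot ℂ).1 hu]
  | succ n =>
    suffices h : wordSpan ι D Ψ S (n + 1) s ≤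
        (wordSpan ι D Ψ S (n + 1) s).comap (LinearMap.mulLeft ℂ (ι d)) from h hu
    refine succ_le (fun d' hd' => ?_) fun i hi c hc w hw => ?_
    · simpa using coe_mem (ι := ι) (MulMemClass.mul_mem hd hd')
    · simpa [mul_assoc] using mul_mem hi (hΨ.coe_mul_mem_centeredPart (hS i) hd hc) hw

theorem centered_mul_mem (hΨ : IsConditionalExpectation ι D Ψ) (hS : ∀ i b, ι b ∈ S i)
    (hc : c ∈ centeredPart Ψ (S i)) (hu : u ∈ wordSpan ι D Ψ S n Set.univ) :
    c * u ∈ wordSpan ι D Ψ S (n + 1) Set.univ := by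
  cases n with
  | zero => simp [(Submodule.mem_bot ℂ).1 hu]
  | succ n =>
    suffices h : wordSpan ι D Ψ S (n + 1) Set.univ ≤
        (wordSpan ι D Ψ S (n + 2) Set.univ).comap (LinearMap.mulLeft ℂ c) from h hu
    refine succ_le (fun d hd => mul_mem (Set.mem_univ i) hc (coe_mem hd)) fun j _ c' hc' w hw => ?_
    obtain rfl | hij := eq_or_ne i j
    · have hcc' := MulMemClass.mul_mem (S := StarSubalgebra ℂ A) hc.1 hc'.1
      have hsplit : c * (c' * w) = (c * c' - ι (Ψ (c * c'))) * w + ι (Ψ (c * c')) * w := by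
        noncomm_ring
      rw [Submodule.mem_comap, LinearMap.mulLeft_apply, hsplit]
      exact add_mem
        (mono (by omega) (Set.subset_univ _)
          (mul_mem (Set.mem_singleton i) (hΨ.sub_coe_mem_centeredPart (hS i) hcc') hw))
        (mono (by omega) (Set.subset_univ _) (coe_mul_mem hΨ hS (hΨ.map_mem _) hw))
    · exact mul_mem (Set.mem_univ i) hc (mul_mem hij.symm hc' hw)

theorem left_mul_mem (hΨ : IsConditionalExpectation ι D Ψ) (hS : ∀ i b, ι b ∈ S i)
    (ha : a ∈ S i) (hu : u ∈ wordSpan ι D Ψ S n Set.univ) :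
    a * u ∈ wordSpan ι D Ψ S (n + 1) Set.univ := by
  rw [← sub_add_cancel a (ι (Ψ a)), add_mul]
  exact add_mem (centered_mul_mem hΨ hS (hΨ.sub_coe_mem_centeredPart (hS i) ha) hu)
    (mono n.le_succ le_rfl (coe_mul_mem hΨ hS (hΨ.map_mem a) hu))

theorem exists_mem_of_mem_iSup (hΨ : IsConditionalExpectation ι D Ψ) (hS : ∀ i b, ι b ∈ S i)
    (ha : a ∈ ⨆ i, S i) : ∃ n, a ∈ wordSpan ι D Ψ S n Set.univ := by
  have hmem : ∀ {x}, x ∈ ⨆ n, wordSpan ι D Ψ S n Set.univ ↔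
      ∃ n, x ∈ wordSpan ι D Ψ S n Set.univ :=
    Submodule.mem_iSup_of_directed _ (Monotone.directed_le fun _ _ h => mono h Set.Subset.rfl)
  -- Stability under left multiplication by `a` and `star a` passes to sums, products and adjoints.
  suffices h : ∀ u ∈ ⨆ n, wordSpan ι D Ψ S n Set.univ,
      a * u ∈ ⨆ n, wordSpan ι D Ψ S n Set.univ ∧ star a * u ∈ ⨆ n, wordSpan ι D Ψ S n Set.univ by
    simpa using hmem.1 (h 1 (hmem.2 ⟨1, by simpa using coe_mem (ι := ι) (one_mem D)⟩)).1
  rw [← StarAlgebra.gi.l_iSup_u S] at ha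
  induction ha using StarAlgebra.adjoin_induction with
  | mem x hx =>
    obtain ⟨i, hi⟩ := Set.mem_iUnion.1 hx
    intro u hu
    obtain ⟨n, hn⟩ := hmem.1 hu
    exact ⟨hmem.2 ⟨_, left_mul_mem hΨ hS hi hn⟩, hmem.2 ⟨_, left_mul_mem hΨ hS (star_mem hi) hn⟩⟩
  | algebraMap z =>
    intro u hu
    simpa [Algebra.algebraMap_eq_smul_one] using
      ⟨Submodule.smul_mem _ z hu, Submodule.smul_mem _ (star z) hu⟩
  | add x y _ _ hx hy =>
    intro u hu
    simp only [star_add, add_mul]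
    exact ⟨add_mem (hx u hu).1 (hy u hu).1, add_mem (hx u hu).2 (hy u hu).2⟩
  | mul x y _ _ hx hy =>
    intro u hu
    simp only [star_mul, mul_assoc]
    exact ⟨(hx _ (hy u hu).1).1, (hy _ (hx u hu).2).2⟩
  | star x _ hx => exact fun u hu => by simpa using (hx u hu).symm

end wordSpan

namespace IsCFreeFamily

theorem map_prod_centered_mul (h : IsCFreeFamily E Ψ S) (hE : IsConditionalExpectation ι R E)
    (hDR : D ≤ R) {ε : Fin (m + 1) → I} (hε : ∀ i : Fin m, ε i.castSucc ≠ ε i.succ)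
    {a : Fin (m + 1) → A} (ha : ∀ j, a j ∈ centeredPart Ψ (S (ε j)))
    (hv : v ∈ wordSpan ι D Ψ S n {ε (Fin.last m)}ᶜ) :
    E ((List.ofFn a).prod * v) = (List.ofFn fun j => E (a j)).prod * E v := by
  induction n generalizing m v with
  | zero => simp [(Submodule.mem_bot ℂ).1 hv]
  | succ n ih =>
    suffices hle : wordSpan ι D Ψ S (n + 1) {ε (Fin.last m)}ᶜ ≤ LinearMap.eqLocus
        (E ∘ₗ LinearMap.mulLeft ℂ (List.ofFn a).prod)
        (LinearMap.mulLeft ℂ (List.ofFn fun j => E (a j)).prod ∘ₗ E) from hle hv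
    refine wordSpan.succ_le (fun d hd => ?_) fun i hi c hc w hw => ?_
    · have hprod := (h m ε hε a (fun j => (ha j).1) fun j => (ha j).2).2
      simp only [LinearMap.mem_eqLocus, LinearMap.comp_apply, LinearMap.mulLeft_apply,
        hE.map_mul_coe (hDR hd), hE.map_coe d (hDR hd), hprod]
    · have hcons : ∀ i' : Fin (m + 1), (Fin.snoc ε i : Fin (m + 2) → I) i'.castSucc ≠
          (Fin.snoc ε i : Fin (m + 2) → I) i'.succ :=
        Fin.lastCases (by simpa using Ne.symm hi) fun i' => by
          simpa [← Fin.castSucc_succ] using hε i'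
      have hmem : ∀ j, (Fin.snoc a c : Fin (m + 2) → A) j ∈
          centeredPart Ψ (S ((Fin.snoc ε i : Fin (m + 2) → I) j)) :=
        Fin.lastCases (by simpa using hc) fun j => by simpa using ha j
      have hsnoc := ih hcons hmem (v := w) (by simpa using hw)
      have hcw : E (c * w) = E c * E w := by
        simpa using ih (m := 0) (ε := fun _ => i) (a := fun _ => c) (fun j => j.elim0)
          (fun _ => hc) hw
      have hEsnoc : (fun j => E ((Fin.snoc a c : Fin (m + 2) → A) j)) =
          Fin.snoc (fun j => E (a j)) (E c) := Fin.comp_snoc E a c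
      rw [hEsnoc, prod_ofFn_snoc, prod_ofFn_snoc, mul_assoc, mul_assoc] at hsnoc
      simp only [LinearMap.mem_eqLocus, LinearMap.comp_apply, LinearMap.mulLeft_apply, hsnoc, hcw]

theorem map_centered_mul (h : IsCFreeFamily E Ψ S) (hE : IsConditionalExpectation ι R E)
    (hDR : D ≤ R) (hc : c ∈ centeredPart Ψ (S i)) (hv : v ∈ wordSpan ι D Ψ S n {i}ᶜ) :
    E (c * v) = E c * E v := by
  simpa using h.map_prod_centered_mul hE hDR (m := 0) (ε := fun _ => i) (a := fun _ => c)
    (fun j => j.elim0) (fun _ => hc) hv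

theorem covariance_mul_left (h : IsCFreeFamily E Ψ S) (hE : IsConditionalExpectation ι R E)
    (hDR : D ≤ R) (hEstar : ∀ a ∈ S i, E (star a) = star (E a))
    (hΨstar : ∀ a ∈ S i, Ψ (star a) = star (Ψ a)) (hc : c ∈ centeredPart Ψ (S i))
    (hu : u ∈ wordSpan ι D Ψ S n {i}ᶜ) (hv : v ∈ wordSpan ι D Ψ S m {i}ᶜ) :
    covariance E (c * u) v = covariance E u (star c * v) := by
  simp only [covariance_apply, h.map_centered_mul hE hDR hc hu,
    h.map_centered_mul hE hDR (star_mem_centeredPart hΨstar hc) hv, hEstar c hc.1, star_mul,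
    mul_assoc]

theorem covariance_eq_zero (h : IsCFreeFamily E Ψ S) (hE : IsConditionalExpectation ι R E)
    (hDR : D ≤ R) (hEstar : ∀ i, ∀ a ∈ S i, E (star a) = star (E a))
    (hΨstar : ∀ i, ∀ a ∈ S i, Ψ (star a) = star (Ψ a)) (hst : Disjoint s t)
    (hu : u ∈ wordSpan ι D Ψ S n s) (hv : v ∈ wordSpan ι D Ψ S m t) : covariance E u v = 0 := by
  induction n generalizing m s t u v with
  | zero => simp [(Submodule.mem_bot ℂ).1 hu]
  | succ n ih =>
    suffices hle : wordSpan ι D Ψ S (n + 1) s ≤ LinearMap.ker ((covariance E).flip v) from hle hu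
    refine wordSpan.succ_le (fun d hd => hE.covariance_coe_left (hDR hd) v)
      fun i hi c hc w hw => ?_
    have hv' : v ∈ wordSpan ι D Ψ S m {i}ᶜ :=
      wordSpan.mono le_rfl (Set.subset_compl_singleton_iff.2 (hst.notMem_of_mem_left hi)) hv
    rw [LinearMap.mem_ker, LinearMap.flip_apply,
      h.covariance_mul_left hE hDR (hEstar i) (hΨstar i) hc hw hv']
    exact ih disjoint_compl_left hw
      (wordSpan.mul_mem (Set.mem_singleton i) (star_mem_centeredPart (hΨstar i) hc) hv')

theorem covariance_mul_mul (h : IsCFreeFamily E Ψ S) (hE : IsConditionalExpectation ι R E)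
    (hΨ : IsConditionalExpectation ι D Ψ) (hDR : D ≤ R)
    (hEstar : ∀ i, ∀ a ∈ S i, E (star a) = star (E a))
    (hΨstar : ∀ i, ∀ a ∈ S i, Ψ (star a) = star (Ψ a)) (hS : ∀ b, ι b ∈ S i)
    (hc : c ∈ centeredPart Ψ (S i)) (hc' : c' ∈ centeredPart Ψ (S i))
    (hw : w ∈ wordSpan ι D Ψ S n {i}ᶜ) (hw' : w' ∈ wordSpan ι D Ψ S m {i}ᶜ) :
    covariance E (c * w) (c' * w') = star (E w) * covariance E c c' * E w' +
      covariance E w (ι (Ψ (star c * c')) * w') := by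
  have hb := hΨ.sub_coe_mem_centeredPart hS
    (mul_mem (S := StarSubalgebra ℂ A) (star_mem (S := StarSubalgebra ℂ A) hc.1) hc'.1)
  have horth := h.covariance_eq_zero hE hDR hEstar hΨstar disjoint_compl_left hw
    (wordSpan.mul_mem (Set.mem_singleton i) hb hw')
  have hΨR := hDR (hΨ.map_mem (star c * c'))
  rw [covariance_apply, h.map_centered_mul hE hDR hb hw', map_sub, hE.map_coe _ hΨR] at horth
  simp only [covariance_apply, h.map_centered_mul hE hDR hc hw, h.map_centered_mul hE hDR hc' hw',
    hE.map_coe_mul hΨR, star_mul, sub_mul, mul_sub, map_sub, mul_assoc] at horth ⊢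
  rw [sub_eq_iff_eq_add, zero_add, sub_eq_iff_eq_add] at horth
  rw [horth]
  abel

end IsCFreeFamily

end CFree

namespace IsConditionalExpectation

variable {A B : Type*} [Ring A] [Algebra ℂ A] [StarRing A] [StarModule ℂ A]
  {T : StarSubalgebra ℂ A}

theorem covariance_self_nonneg [Ring B] [Algebra ℂ B] [StarRing B] [StarModule ℂ B]
    [PartialOrder B] [StarOrderedRing B] {ι : B →⋆ₐ[ℂ] A} {R : StarSubalgebra ℂ B}
    {E : A →ₗ[ℂ] B} (hE : IsConditionalExpectation ι R E) (hT : ∀ b, ι b ∈ T)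
    (hpos : ∀ a ∈ T, 0 ≤ E (star a * a)) {a : A} (ha : a ∈ T) : 0 ≤ covariance E a a := by
  have hEa := hE.map_mem a
  have hcov : covariance E a a = E (star (a - ι (E a)) * (a - ι (E a))) := by
    have hstar := map_star_of_forall_map_star_mul_self_nonneg hpos ha
    simp only [covariance_apply, star_sub, ← map_star, sub_mul, mul_sub, map_sub, hstar,
      hE.map_mul_coe hEa, hE.map_coe_mul (star_mem hEa), hE.map_coe _ (star_mem hEa)]
    abel
  exact hcov ▸ hpos _ (sub_mem ha (hT _))

theorem exists_gram_eq_sum_star_mul [CStarAlgebra B] [PartialOrder B] [StarOrderedRing B]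
    {ι : B →⋆ₐ[ℂ] A} {D : StarSubalgebra ℂ B} {Ψ : A →ₗ[ℂ] B}
    (hΨ : IsConditionalExpectation ι D Ψ) (hD : IsClosed (D : Set B)) (hT : ∀ b, ι b ∈ T)
    (hpos : ∀ a ∈ T, 0 ≤ Ψ (star a * a)) {κ : Type*} [Fintype κ] {c : κ → A}
    (hc : ∀ j, c j ∈ T) :
    ∃ q : κ → κ → B, (∀ l j, q l j ∈ D) ∧
      ∀ j k, Ψ (star (c j) * c k) = ∑ l, star (q l j) * q l k := by
  refine exists_mem_eq_sum_star_mul hD (fun _ _ => hΨ.map_mem _) (fun j k => ?_) fun x hx => ?_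
  · rw [← map_star_of_forall_map_star_mul_self_nonneg hpos (mul_mem (star_mem (hc j)) (hc k)),
      star_mul, star_star]
  · have hquad : ∑ j, ∑ k, star (x j) * Ψ (star (c j) * c k) * x k =
        Ψ (star (∑ j, c j * ι (x j)) * ∑ k, c k * ι (x k)) := by
      simp only [star_sum, star_mul, Finset.sum_mul_sum, map_sum,
        ← hΨ.map_mul_mul _ (star_mem (hx _)) _ (hx _), map_star, mul_assoc]
    exact hquad ▸ hpos _ (sum_mem fun j _ => mul_mem (hc j) (hT _))

end IsConditionalExpectation

namespace IsCFreeFamily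

variable {A B I : Type*} [Ring A] [Algebra ℂ A] [StarRing A] [StarModule ℂ A]
  [CStarAlgebra B] [PartialOrder B] [StarOrderedRing B]
  {ι : B →⋆ₐ[ℂ] A} {D R : StarSubalgebra ℂ B} {E Ψ : A →ₗ[ℂ] B}
  {S : I → StarSubalgebra ℂ A} {n : ℕ} {i : I} {a u : A}

theorem covariance_self_nonneg_of_mem_mul (h : IsCFreeFamily E Ψ S)
    (hE : IsConditionalExpectation ι R E) (hΨ : IsConditionalExpectation ι D Ψ) (hDR : D ≤ R)
    (hD : IsClosed (D : Set B)) (hS : ∀ i b, ι b ∈ S i)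
    (hEpos : ∀ i, ∀ a ∈ S i, 0 ≤ E (star a * a)) (hΨpos : ∀ i, ∀ a ∈ S i, 0 ≤ Ψ (star a * a))
    (ih : ∀ v ∈ wordSpan ι D Ψ S n {i}ᶜ, 0 ≤ covariance E v v)
    (hu : u ∈ centeredPart Ψ (S i) * wordSpan ι D Ψ S n {i}ᶜ) : 0 ≤ covariance E u u := by
  obtain ⟨m, c, w, hc, hw, rfl⟩ := exists_eq_sum_mul_of_mem_mul hu
  obtain ⟨q, hqD, hq⟩ := hΨ.exists_gram_eq_sum_star_mul hD (hS i) (hΨpos i) fun j => (hc j).1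
  have hEstar := fun i a (ha : a ∈ S i) => map_star_of_forall_map_star_mul_self_nonneg (hEpos i) ha
  have hΨstar := fun i a (ha : a ∈ S i) => map_star_of_forall_map_star_mul_self_nonneg (hΨpos i) ha
  have hfirst : ∑ j, ∑ k, star (E (w k)) * covariance E (c k) (c j) * E (w j) =
      covariance E (∑ j, c j * ι (E (w j))) (∑ j, c j * ι (E (w j))) := by
    simp only [map_sum, LinearMap.sum_apply, hE.covariance_mul_coe (hE.map_mem _) (hE.map_mem _)]
  have hsecond : ∑ j, ∑ k, covariance E (w k) (ι (Ψ (star (c k) * c j)) * w j) =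
      ∑ l, covariance E (∑ j, ι (q l j) * w j) (∑ j, ι (q l j) * w j) := by
    simp only [hq, map_sum, LinearMap.sum_apply, Finset.sum_mul, map_mul,
      hE.covariance_coe_mul_left (hDR (hqD _ _)), mul_assoc]
    exact Finset.sum_comm_cycle
  have hcov : covariance E (∑ j, c j * w j) (∑ j, c j * w j) =
      covariance E (∑ j, c j * ι (E (w j))) (∑ j, c j * ι (E (w j))) +
        ∑ l, covariance E (∑ j, ι (q l j) * w j) (∑ j, ι (q l j) * w j) := by
    rw [← hfirst, ← hsecond]
    simp only [map_sum, LinearMap.sum_apply, ← Finset.sum_add_distrib,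
      h.covariance_mul_mul hE hΨ hDR hEstar hΨstar (hS i) (hc _) (hc _) (hw _) (hw _)]
  rw [hcov]
  refine add_nonneg ?_ (Finset.sum_nonneg fun l _ => ih _ (sum_mem fun j _ => ?_))
  · exact hE.covariance_self_nonneg (hS i) (hEpos i)
      (sum_mem fun j _ => mul_mem (S := StarSubalgebra ℂ A) (hc j).1 (hS i _))
  · exact wordSpan.coe_mul_mem hΨ hS (hqD l j) (hw j)

theorem covariance_self_nonneg (h : IsCFreeFamily E Ψ S)
    (hE : IsConditionalExpectation ι R E) (hΨ : IsConditionalExpectation ι D Ψ) (hDR : D ≤ R)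
    (hD : IsClosed (D : Set B)) (hS : ∀ i b, ι b ∈ S i)
    (hEpos : ∀ i, ∀ a ∈ S i, 0 ≤ E (star a * a)) (hΨpos : ∀ i, ∀ a ∈ S i, 0 ≤ Ψ (star a * a))
    (hu : u ∈ wordSpan ι D Ψ S n Set.univ) : 0 ≤ covariance E u u := by
  have horth := fun {n m s t u v} => h.covariance_eq_zero (n := n) (m := m) (s := s) (t := t)
    (u := u) (v := v) hE hDR
    (fun i a (ha : a ∈ S i) => map_star_of_forall_map_star_mul_self_nonneg (hEpos i) ha)
    (fun i a (ha : a ∈ S i) => map_star_of_forall_map_star_mul_self_nonneg (hΨpos i) ha)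
  induction n generalizing u with
  | zero => simp [(Submodule.mem_bot ℂ).1 hu]
  | succ n ih =>
    obtain ⟨_, ⟨d, (hd : d ∈ D), rfl⟩, p, hp, rfl⟩ := Submodule.mem_sup.1 hu
    have hpW : p ∈ wordSpan ι D Ψ S (n + 1) Set.univ := Submodule.mem_sup_right hp
    have hdrop : covariance E (ι d + p) (ι d + p) = covariance E p p := by
      have hpd : covariance E p (ι d) = 0 :=
        horth (Set.disjoint_empty _) hpW (wordSpan.coe_mem (n := 0) hd)
      simp only [map_add, LinearMap.add_apply, hE.covariance_coe_left (hDR hd), hpd, zero_add]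
    refine hdrop ▸ sesquilin_self_nonneg_of_mem_iSup (fun i v hv => ?_)
      (fun i j hij v hv v' hv' => ?_) (by simpa using hp)
    · exact h.covariance_self_nonneg_of_mem_mul hE hΨ hDR hD hS hEpos hΨpos
        (fun v hv => ih (wordSpan.mono le_rfl (Set.subset_univ _) hv)) hv
    · exact horth (Set.disjoint_singleton.2 hij) (wordSpan.mul_le (Set.mem_singleton i) hv)
        (wordSpan.mul_le (Set.mem_singleton j) hv')

theorem map_star_mul_self_nonneg (h : IsCFreeFamily E Ψ S)
    (hE : IsConditionalExpectation ι R E) (hΨ : IsConditionalExpectation ι D Ψ) (hDR : D ≤ R)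
    (hD : IsClosed (D : Set B)) (hS : ∀ i b, ι b ∈ S i)
    (hEpos : ∀ i, ∀ a ∈ S i, 0 ≤ E (star a * a)) (hΨpos : ∀ i, ∀ a ∈ S i, 0 ≤ Ψ (star a * a))
    (ha : a ∈ ⨆ i, S i) : 0 ≤ E (star a * a) := by
  obtain ⟨n, hn⟩ := wordSpan.exists_mem_of_mem_iSup hΨ hS ha
  rw [← sub_add_cancel (E (star a * a)) (star (E a) * E a), ← covariance_apply]
  exact add_nonneg (h.covariance_self_nonneg hE hΨ hDR hD hS hEpos hΨpos hn)
    (star_mul_self_nonneg _)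

end IsCFreeFamily

theorem stmt_3_general {A B I : Type*} [CStarAlgebra B] [PartialOrder B] [StarOrderedRing B]
    [Ring A] [Algebra ℂ A] [StarRing A] [StarModule ℂ A] {ι : B →⋆ₐ[ℂ] A}
    {D : StarSubalgebra ℂ B} (hD : IsClosed (D : Set B)) {Φ Ψ : A →ₗ[ℂ] B}
    (hΦ : IsConditionalExpectation ι ⊤ Φ) (hΨ : IsConditionalExpectation ι D Ψ)
    {S : I → StarSubalgebra ℂ A} (hS : ∀ i b, ι b ∈ S i) (hfree : IsCFreeFamily Φ Ψ S)
    (hpos : ∀ i, ∀ a ∈ S i, 0 ≤ Φ (star a * a) ∧ 0 ≤ Ψ (star a * a)) :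
    ∀ a ∈ ⨆ i, S i, 0 ≤ Φ (star a * a) ∧ 0 ≤ Ψ (star a * a) := fun _ ha =>
  have hΦpos := fun i a (ha : a ∈ S i) => (hpos i a ha).1
  have hΨpos := fun i a (ha : a ∈ S i) => (hpos i a ha).2
  ⟨hfree.map_star_mul_self_nonneg hΦ hΨ le_top hD hS hΦpos hΨpos ha,
    hfree.self.map_star_mul_self_nonneg hΨ hΨ le_rfl hD hS hΨpos hΨpos ha⟩

theorem stmt_3 {B A : Type*}
    [CStarAlgebra B] [PartialOrder B] [StarOrderedRing B]
    [Ring A] [Algebra ℂ A] [StarRing A] [StarModule ℂ A]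
    -- `𝔅` sits inside `𝔄` as a unital *-subalgebra:
    (ι : B →⋆ₐ[ℂ] A) (hι : Function.Injective ι)
    -- `𝔇` is a C*-subalgebra of `𝔅`:
    (D : StarSubalgebra ℂ B) (hD : IsClosed (D : Set B))
    -- `Φ : 𝔄 → 𝔅` is a conditional expectation:
    (Φ : A →ₗ[ℂ] B)
    (hΦbimod : ∀ (b b' : B) (a : A), Φ (ι b * a * ι b') = b * Φ a * b')
    (hΦid : ∀ b : B, Φ (ι b) = b)
    -- `Ψ : 𝔄 → 𝔇` is a conditional expectation:
    (Ψ : A →ₗ[ℂ] B) (hΨD : ∀ a : A, Ψ a ∈ D)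
    (hΨbimod : ∀ d d' : B, d ∈ D → d' ∈ D → ∀ a : A, Ψ (ι d * a * ι d') = d * Ψ a * d')
    (hΨid : ∀ d : B, d ∈ D → Ψ (ι d) = d)
    -- `X`, `Y` are selfadjoint:
    (X Y : A) (hX : star X = X) (hY : star Y = Y)
    -- `X`, `Y` are c-free with respect to `(Φ, Ψ)`:
    (hfree : IsCFreeFamily Φ Ψ (fun t : Bool =>
        if t then StarAlgebra.adjoin ℂ (Set.range ι ∪ {X})
        else StarAlgebra.adjoin ℂ (Set.range ι ∪ {Y})))
    -- `Φ` and `Ψ` are positive on the *-subalgebras generated by `𝔅 ∪ {X}`, `𝔅 ∪ {Y}`: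
    (hXpos : ∀ a ∈ StarAlgebra.adjoin ℂ (Set.range ι ∪ {X}),
        0 ≤ Φ (star a * a) ∧ 0 ≤ Ψ (star a * a))
    (hYpos : ∀ a ∈ StarAlgebra.adjoin ℂ (Set.range ι ∪ {Y}),
        0 ≤ Φ (star a * a) ∧ 0 ≤ Ψ (star a * a)) :
    ∀ a ∈ StarAlgebra.adjoin ℂ (Set.range ι ∪ {X + Y}),
      0 ≤ Φ (star a * a) ∧ 0 ≤ Ψ (star a * a) := by
  have hmem (x : A) (b : B) : ι b ∈ StarAlgebra.adjoin ℂ (Set.range ι ∪ {x}) :=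
    StarAlgebra.subset_adjoin ℂ _ (.inl ⟨b, rfl⟩)
  have hΦ : IsConditionalExpectation ι ⊤ Φ :=
    ⟨fun _ => trivial, fun b _ b' _ => hΦbimod b b', fun b _ => hΦid b⟩
  have hΨ : IsConditionalExpectation ι D Ψ :=
    ⟨hΨD, fun d hd d' hd' => hΨbimod d d' hd hd', hΨid⟩
  have hpos := stmt_3_general hD hΦ hΨ (Bool.forall_bool.2 ⟨hmem Y, hmem X⟩) hfree
    (Bool.forall_bool.2 ⟨hYpos, hXpos⟩)
  rw [iSup_bool_eq] at hpos
  exact fun a ha => hpos a (adjoin_union_singleton_add_le ℂ (Set.range ι) X Y ha)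
end
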